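/- arXiv:2204.11303 — 2 statements merged into one kernel-verified Lean document; each statement's English description precedes it below -/
import Mathlib

section
/- Let p be a prime and P a generalized extraspecial p-group. Suppose some maximal subgroup M of P is elementary abelian. Then there exist subgroups E and A of P such that E is nonabelian of order p^3, A is elementary abelian, every element of E commutes with every element of A, E ∩ A = 1, and P = EA (so P is the internal direct product E × A). -/
theorem aux_cop {G : Type*} [Group G] (H : Subgroup G) (g : G) (a b : ℤ) (h : IsCoprime a b)
    (ha : g ^ a ∈ H) (hb : g ^ b ∈ H) : g ∈ H := by
  obtain ⟨u, v, huv⟩ := h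
  have : g = (g ^ a) ^ u * (g ^ b) ^ v := by
    rw [← zpow_mul, ← zpow_mul, ← zpow_add, mul_comm a, mul_comm b, huv, zpow_one]
  rw [this]
  exact H.mul_mem (H.zpow_mem ha _) (H.zpow_mem hb _)

theorem aux_dvd {G : Type*} [Group G] (H : Subgroup G) (g : G) (p : ℕ) (hp : p.Prime)
    (i : ℤ) (h1 : g ^ p ∈ H) (h2 : g ^ i ∈ H) (h3 : g ∉ H) : (p : ℤ) ∣ i := by
  by_contra hd
  exact h3 (aux_cop H g p i ((Nat.prime_iff_prime_int.mp hp).coprime_iff_not_dvd.mpr hd)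
    (by simpa using h1) h2)

theorem aux_card {G : Type*} [Group G] [Finite G] (H : Subgroup G) [H.Normal] (g : G) (p : ℕ)
    (hp : p.Prime) (h1 : g ^ p ∈ H) (h3 : g ∉ H) :
    Nat.card (H ⊔ Subgroup.zpowers g : Subgroup G) = Nat.card H * p := by
  have h : H.relIndex (H ⊔ Subgroup.zpowers g) = p := by
    rw [Subgroup.relIndex_sup_left]
    have := Subgroup.relIndex_ker (K := Subgroup.zpowers g) (QuotientGroup.mk' H)
    rw [QuotientGroup.ker_mk'] at this
    rw [this, MonoidHom.map_zpowers, Nat.card_zpowers]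
    have := Fact.mk hp
    apply orderOf_eq_prime
    · rw [← map_pow]; exact (QuotientGroup.eq_one_iff _).mpr h1
    · simpa using h3
  have h2 := Subgroup.relIndex_mul_relIndex ⊥ H (H ⊔ Subgroup.zpowers g) bot_le le_sup_left
  rw [Subgroup.relIndex_bot_left, Subgroup.relIndex_bot_left, h] at h2
  exact h2.symm

theorem aux_pow {G : Type*} [Group G] [Finite G] (p : ℕ) (hp : p.Prime)
    (hG : IsPGroup p G) (h : frattini G = commutator G) (x : G) : x ^ p ∈ commutator G := by
  rw [← h]
  simp only [frattini, Order.radical, Subgroup.mem_iInf, Set.mem_ofPred_eq]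
  intro K hK
  have hN : K.Normal := Subgroup.Normal.of_commutator_le _ (h ▸ frattini_le_coatom hK)
  by_contra hx
  have htop : K ⊔ Subgroup.zpowers (x ^ p) = ⊤ := by
    apply hK.2
    refine lt_of_le_of_ne le_sup_left fun he => hx ?_
    rw [he]
    exact Subgroup.mem_sup_right (Subgroup.mem_zpowers _)
  have hxm : x ∈ K ⊔ Subgroup.zpowers (x ^ p) := htop ▸ Subgroup.mem_top x
  obtain ⟨k, hk, z, hz, hkz⟩ := Subgroup.mem_sup_of_normal_left.mp hxm
  obtain ⟨i, rfl⟩ := Subgroup.mem_zpowers_iff.mp hz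
  obtain ⟨n, hn⟩ := hG x
  apply hx
  apply K.pow_mem
  apply aux_cop K x (1 - p * i) ((p : ℤ) ^ n)
  · apply IsCoprime.pow_right
    exact ⟨1, i, by ring⟩
  · have : x ^ (1 - p * i : ℤ) = k := by
      rw [zpow_sub, zpow_one, zpow_mul, zpow_natCast, mul_inv_eq_iff_eq_mul, hkz]
    rwa [this]
  · have : x ^ ((p : ℤ) ^ n) = 1 := by rw [← hn]; exact_mod_cast zpow_natCast x (p ^ n)
    rw [this]; exact K.one_mem

theorem aux_gen {G : Type*} [Group G] (C : Subgroup G) (p : ℕ) (hp : p.Prime)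
    (hC : Nat.card C = p) (c d : G) (hc : c ∈ C) (hd : d ∈ C) (h1 : c ≠ 1) :
    ∃ j : ℤ, c ^ j = d := by
  have := Fact.mk hp
  have := mem_zpowers_of_prime_card (g := (⟨c, hc⟩ : C)) (g' := ⟨d, hd⟩) hC
    (by simpa [Subtype.ext_iff] using h1)
  obtain ⟨j, hj⟩ := Subgroup.mem_zpowers_iff.mp this
  exact ⟨j, by simpa [Subtype.ext_iff] using hj⟩

theorem aux_central {G : Type*} [Group G] [Finite G] (p : ℕ) (hp : p.Prime)
    (hG : IsPGroup p G) (C : Subgroup G) [C.Normal] (hC : Nat.card C = p) (c : G) (hc : c ∈ C)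
    (g : G) : g * c = c * g := by
  have := Fact.mk hp
  have hG' : IsPGroup p (ConjAct G) := hG
  obtain ⟨b, hb, hb1⟩ := hG'.exists_fixed_point_of_prime_dvd_card_of_fixed_point (C : Type _)
    (by rw [hC]) (a := 1) (by intro g; exact smul_one g)
  obtain ⟨j, hj⟩ := aux_gen C p hp hC b c b.2 hc (fun h => hb1 (Subtype.ext h.symm))
  have h2 : g * (b : G) * g⁻¹ = b := by
    have := hb (ConjAct.toConjAct g)
    exact congrArg Subtype.val this
  have h3 : Commute g (b : G) := by
    exact mul_inv_eq_iff_eq_mul.mp h2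
  rw [← hj]
  exact (h3.zpow_right j)

theorem aux_compl {G : Type*} [Group G] [Finite G] (p : ℕ) (hp : p.Prime) (Z C : Subgroup G)
    (hCZ : C ≤ Z) (hab : ∀ x ∈ Z, ∀ y ∈ Z, x * y = y * x) (he : ∀ x ∈ Z, x ^ p = 1) :
    ∃ A : Subgroup G, A ≤ Z ∧ A ⊓ C = ⊥ ∧ ∀ z ∈ Z, ∃ a ∈ A, ∃ c ∈ C, z = a * c := by
  obtain ⟨A, hA⟩ := Set.Finite.exists_maximal (s := {A : Subgroup G | A ≤ Z ∧ A ⊓ C = ⊥})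
    (Set.toFinite _) ⟨⊥, bot_le, bot_inf_eq _⟩
  obtain ⟨hAZ, hAC⟩ := hA.prop
  refine ⟨A, hAZ, hAC, fun z hz => ?_⟩
  by_contra hcon
  let D : Subgroup G :=
    { carrier := {g | ∃ a ∈ A, ∃ c ∈ C, g = a * c}
      one_mem' := ⟨1, A.one_mem, 1, C.one_mem, by simp⟩
      mul_mem' := by
        rintro _ _ ⟨a, ha, c, hc, rfl⟩ ⟨a', ha', c', hc', rfl⟩
        refine ⟨a * a', A.mul_mem ha ha', c * c', C.mul_mem hc hc', ?_⟩
        have := hab c (hCZ hc) a' (hAZ ha')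
        rw [mul_assoc, ← mul_assoc c, this]; group
      inv_mem' := by
        rintro _ ⟨a, ha, c, hc, rfl⟩
        refine ⟨a⁻¹, A.inv_mem ha, c⁻¹, C.inv_mem hc, ?_⟩
        rw [hab a (hAZ ha) c (hCZ hc)]; group }
  have hzD : z ∉ D := hcon
  let B : Subgroup G :=
    { carrier := {g | ∃ a ∈ A, ∃ i : ℤ, g = a * z ^ i}
      one_mem' := ⟨1, A.one_mem, 0, by simp⟩
      mul_mem' := by
        rintro _ _ ⟨a, ha, i, rfl⟩ ⟨a', ha', j, rfl⟩
        refine ⟨a * a', A.mul_mem ha ha', i + j, ?_⟩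
        have := hab (z ^ i) (Z.zpow_mem hz i) a' (hAZ ha')
        rw [mul_assoc, ← mul_assoc (z ^ i), this, zpow_add]; group
      inv_mem' := by
        rintro _ ⟨a, ha, i, rfl⟩
        refine ⟨a⁻¹, A.inv_mem ha, -i, ?_⟩
        rw [hab a (hAZ ha) (z ^ i) (Z.zpow_mem hz i)]; group }
  have hAB : A ≤ B := fun a ha => ⟨a, ha, 0, by simp⟩
  have hzB : z ∈ B := ⟨1, A.one_mem, 1, by simp⟩
  have hB : B ≤ Z ∧ B ⊓ C = ⊥ := by
    constructor
    · rintro _ ⟨a, ha, i, rfl⟩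
      exact Z.mul_mem (hAZ ha) (Z.zpow_mem hz i)
    · rw [eq_bot_iff]
      rintro _ ⟨⟨a, ha, i, rfl⟩, hc⟩
      have hi : z ^ i ∈ D := ⟨a⁻¹, A.inv_mem ha, a * z ^ i, hc, by group⟩
      obtain ⟨k, rfl⟩ := aux_dvd D z p hp i (by rw [he z hz]; exact D.one_mem) hi hzD
      have h1 : z ^ ((p : ℤ) * k) = 1 := by
        rw [zpow_mul, zpow_natCast, he z hz, one_zpow]
      simp only [h1, mul_one] at hc ⊢
      rw [← hAC]
      exact ⟨ha, hc⟩
  have : z ∈ A := hA.le_of_ge hB hAB hzB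
  exact hcon ⟨z, this, 1, C.one_mem, by simp⟩

theorem stmt_6 {P : Type*} [Group P] [Finite P] (p : ℕ) (hp : p.Prime)
    (hpgrp : IsPGroup p P)
    (hges1 : frattini P = commutator P) (hges2 : Nat.card (commutator P) = p)
    (M : Subgroup P) (hM : IsCoatom M)
    (hMab : ∀ x ∈ M, ∀ y ∈ M, x * y = y * x) (hMexp : ∀ x ∈ M, x ^ p = 1) :
    ∃ E A : Subgroup P,
      (∃ x ∈ E, ∃ y ∈ E, x * y ≠ y * x) ∧ Nat.card E = p ^ 3 ∧
      (∀ x ∈ A, ∀ y ∈ A, x * y = y * x) ∧ (∀ x ∈ A, x ^ p = 1) ∧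
      (∀ x ∈ E, ∀ y ∈ A, x * y = y * x) ∧ E ⊓ A = ⊥ ∧ E ⊔ A = ⊤ := by
  have hCM : commutator P ≤ M := hges1 ▸ frattini_le_coatom hM
  have hcen := aux_central p hp hpgrp (commutator P) hges2
  have hpow := aux_pow p hp hpgrp hges1
  have hco : ∀ a b : P, a * b * a⁻¹ * b⁻¹ ∈ commutator P := fun a b =>
    Subgroup.commutator_mem_commutator (Subgroup.mem_top a) (Subgroup.mem_top b)
  obtain ⟨x, -, hx⟩ := SetLike.exists_of_lt hM.lt_top
  have hgen : ∀ K : Subgroup P, M ≤ K → x ∈ K → K = ⊤ := fun K h1 h2 =>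
    hM.2 K (lt_of_le_of_ne h1 fun h => hx (h ▸ h2))
  obtain ⟨y, hyM, hxy⟩ : ∃ y ∈ M, x * y ≠ y * x := by
    by_contra! hcon
    have hcx : Subgroup.centralizer {x} = (⊤ : Subgroup P) := by
      apply hgen
      · intro m hm
        rw [Subgroup.mem_centralizer_singleton_iff]
        exact (hcon m hm).symm
      · rw [Subgroup.mem_centralizer_singleton_iff]
    have hcm : Subgroup.center P = ⊤ := by
      apply hgen
      · intro m hm
        have : Subgroup.centralizer {m} = (⊤ : Subgroup P) := by
          apply hgen
          · intro m' hm'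
            rw [Subgroup.mem_centralizer_singleton_iff]
            exact hMab m' hm' m hm
          · rw [Subgroup.mem_centralizer_singleton_iff]
            exact hcon m hm
        rw [Subgroup.mem_center_iff]
        intro g
        have hg : g ∈ Subgroup.centralizer {m} := this ▸ Subgroup.mem_top g
        rwa [Subgroup.mem_centralizer_singleton_iff] at hg
      · rw [Subgroup.mem_center_iff]
        intro g
        have hg : g ∈ Subgroup.centralizer {x} := hcx ▸ Subgroup.mem_top g
        rwa [Subgroup.mem_centralizer_singleton_iff] at hg
    have hbot : commutator P = ⊥ := by
      rw [eq_bot_iff, commutator_def, Subgroup.commutator_le]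
      intro a _ b _
      have hb : b ∈ Subgroup.center P := hcm ▸ Subgroup.mem_top b
      rw [Subgroup.mem_center_iff] at hb
      rw [Subgroup.mem_bot, commutatorElement_eq_one_iff_mul_comm]
      exact hb a
    rw [hbot, Subgroup.card_bot] at hges2
    exact hp.one_lt.ne hges2
  obtain ⟨A, hAZ, hAC, hZ⟩ := aux_compl p hp (M ⊓ Subgroup.centralizer {x}) (commutator P)
    (fun c hc => ⟨hCM hc, Subgroup.mem_centralizer_singleton_iff.mpr (hcen c hc x).symm⟩)
    (fun a ha b hb => hMab a ha.1 b hb.1) (fun a ha => hMexp a ha.1)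
  have hAx : ∀ a ∈ A, x * a = a * x := fun a ha =>
    (Subgroup.mem_centralizer_singleton_iff.mp (hAZ ha).2).symm
  have hAM : A ≤ M := fun a ha => (hAZ ha).1
  have hyC : y ∉ commutator P := fun h => hxy (hcen y h x)
  set N := commutator P ⊔ Subgroup.zpowers y with hN
  have hCN : commutator P ≤ N := le_sup_left
  have hNn : N.Normal := Subgroup.Normal.of_commutator_le _ hCN
  have hyN : y ∈ N := Subgroup.mem_sup_right (Subgroup.mem_zpowers y)
  have hNM : N ≤ M := sup_le hCM (by simpa using hyM)
  set E := N ⊔ Subgroup.zpowers x with hE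
  have hNE : N ≤ E := le_sup_left
  have hxE : x ∈ E := Subgroup.mem_sup_right (Subgroup.mem_zpowers x)
  have hEA : ∀ e ∈ E, ∀ a ∈ A, e * a = a * e := by
    intro e he a ha
    have : E ≤ Subgroup.centralizer {a} := by
      refine sup_le (fun n hn => ?_) ?_
      · rw [Subgroup.mem_centralizer_singleton_iff]
        exact hMab n (hNM hn) a (hAM ha)
      · rw [Subgroup.zpowers_le, Subgroup.mem_centralizer_singleton_iff]
        exact hAx a ha
    exact Subgroup.mem_centralizer_singleton_iff.mp (this he)
  refine ⟨E, A, ⟨x, hxE, y, hNE hyN, hxy⟩, ?_, fun a ha b hb => hMab a (hAM ha) b (hAM hb),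
    fun a ha => hMexp a (hAM ha), hEA, ?_, ?_⟩
  · rw [hE, aux_card N x p hp (hCN (hpow x)) (fun h => hx (hNM h)), hN,
      aux_card _ y p hp (hpow y) hyC, hges2]
    ring
  · rw [eq_bot_iff]
    rintro e ⟨he, ha⟩
    rw [← hAC]
    refine ⟨ha, ?_⟩
    obtain ⟨n, hn, z, hz, rfl⟩ := Subgroup.mem_sup_of_normal_left.mp he
    obtain ⟨i, rfl⟩ := Subgroup.mem_zpowers_iff.mp hz
    have hxi : x ^ i ∈ M := (M.mul_mem_cancel_left (hNM hn)).mp (hAM ha)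
    obtain ⟨k, rfl⟩ := aux_dvd M x p hp i (hCM (hpow x)) hxi hx
    have hxC : x ^ ((p : ℤ) * k) ∈ commutator P := by
      rw [zpow_mul, zpow_natCast]; exact Subgroup.zpow_mem _ (hpow x) k
    refine Subgroup.mul_mem _ ?_ hxC
    obtain ⟨c, hc, w, hw, rfl⟩ := Subgroup.mem_sup_of_normal_left.mp hn
    obtain ⟨j, rfl⟩ := Subgroup.mem_zpowers_iff.mp hw
    have hcx : ∀ d ∈ commutator P, d ∈ Subgroup.centralizer {x} := fun d hd =>
      Subgroup.mem_centralizer_singleton_iff.mpr (hcen d hd x).symm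
    have h1 : y ^ j ∈ Subgroup.centralizer {x} := by
      have h2 : _ ∈ Subgroup.centralizer {x} := (hAZ ha).2
      rw [Subgroup.mul_mem_cancel_right _ (hcx _ hxC),
        Subgroup.mul_mem_cancel_left _ (hcx _ hc)] at h2
      exact h2
    obtain ⟨l, rfl⟩ := aux_dvd (Subgroup.centralizer {x}) y p hp j (hcx _ (hpow y)) h1
      (fun h => hxy (Subgroup.mem_centralizer_singleton_iff.mp h).symm)
    refine Subgroup.mul_mem _ hc ?_
    rw [zpow_mul, zpow_natCast]; exact Subgroup.zpow_mem _ (hpow y) l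
  · apply hgen _ _ (Subgroup.mem_sup_left hxE)
    intro m hm
    have hc1 : x * y * x⁻¹ * y⁻¹ ≠ 1 := fun h => hxy (by
      rw [mul_inv_eq_one, mul_inv_eq_iff_eq_mul] at h; exact h)
    obtain ⟨j, hj⟩ := aux_gen _ p hp hges2 _ _ (hco x y) (hco x m) hc1
    have hyj : x * y ^ j * x⁻¹ = (x * m * x⁻¹ * m⁻¹) * y ^ j := by
      have hcomm : Commute (x * y * x⁻¹ * y⁻¹) y := (hcen _ (hco x y) y).symm
      rw [← hj, ← hcomm.mul_zpow, ← conj_zpow]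
      congr 1
      group
    have hz : m * (y ^ j)⁻¹ ∈ M ⊓ Subgroup.centralizer {x} := by
      refine ⟨M.mul_mem hm (M.inv_mem (M.zpow_mem hyM j)), ?_⟩
      refine Subgroup.mem_centralizer_singleton_iff.mpr ?_
      have h3 : x * (m * (y ^ j)⁻¹) * x⁻¹ = m * (y ^ j)⁻¹ := by
        have h4 : x * (m * (y ^ j)⁻¹) * x⁻¹ = (x * m * x⁻¹) * (x * y ^ j * x⁻¹)⁻¹ := by group
        have h5 := hMab _ (M.zpow_mem hyM j) m hm
        rw [h4, hyj]
        have h6 : x * m * x⁻¹ * (x * m * x⁻¹ * m⁻¹ * y ^ j)⁻¹ =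
          (x * m * x⁻¹ * m⁻¹) * (m * (y ^ j)⁻¹) * (x * m * x⁻¹ * m⁻¹)⁻¹ := by group
        rw [h6, ← hcen _ (hco x m) (m * (y ^ j)⁻¹), mul_inv_cancel_right]
      exact (mul_inv_eq_iff_eq_mul.mp h3).symm
    obtain ⟨a, ha, c, hc, hac⟩ := hZ _ hz
    rw [mul_inv_eq_iff_eq_mul] at hac
    rw [hac]
    exact Subgroup.mul_mem _ (Subgroup.mul_mem _ (Subgroup.mem_sup_right ha)
      (Subgroup.mem_sup_left (hNE (hCN hc))))
      (Subgroup.mem_sup_left (hNE (N.zpow_mem hyN j)))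
end

section
/- Let p be an odd prime and P a finite metacyclic p-group. If the automorphism group Aut(P) does not have a normal Sylow p-subgroup, then P is homocyclic abelian of rank 2, i.e. P is isomorphic to C_{p^n} × C_{p^n} for some n ≥ 1. Equivalently, if P is not isomorphic to C_{p^n} × C_{p^n} for any n, then Aut(P) has a normal Sylow p-subgroup. -/
open scoped commutatorElement

theorem aux_coatom {P : Type*} [Group P] [Finite P] (p : ℕ) [hp : Fact p.Prime]
    (hP : IsPGroup p P) (H : Subgroup P) (hH : IsCoatom H) :
    (∀ x, x ^ p ∈ H) ∧ (∀ x y : P, ⁅x, y⁆ ∈ H) := by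
  have := hP.isNilpotent
  have hN : H.Normal := Subgroup.NormalizerCondition.normal_of_coatom H (Group.normalizerCondition_of_isNilpotent) hH
  have hpQ := hP.to_quotient H
  have hnt : Nontrivial (P ⧸ H) := by
    rw [← not_subsingleton_iff_nontrivial, QuotientGroup.subsingleton_iff]
    exact hH.1
  have hdvd : p ∣ Nat.card (P ⧸ H) := by
    obtain ⟨n, hn, h⟩ := hpQ.nontrivial_iff_card.1 hnt
    rw [h]; exact dvd_pow_self p hn.ne'
  obtain ⟨z, hz⟩ := exists_prime_orderOf_dvd_card' p hdvd
  have htop : (Subgroup.zpowers z).comap (QuotientGroup.mk' H) = ⊤ := by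
    apply hH.2
    refine lt_of_le_of_ne ?_ ?_
    · intro x hx
      rw [Subgroup.mem_comap]
      have : QuotientGroup.mk' H x = 1 := (QuotientGroup.eq_one_iff x).2 hx
      rw [this]; exact one_mem _
    · intro h
      obtain ⟨w, rfl⟩ := QuotientGroup.mk'_surjective H z
      have hw : w ∈ H := by
        rw [h]; exact Subgroup.mem_zpowers _
      have : QuotientGroup.mk' H w = 1 := (QuotientGroup.eq_one_iff w).2 hw
      rw [this, orderOf_one] at hz
      exact hp.out.one_lt.ne hz
  have key : ∀ x : P, ∃ i : ℤ, z ^ i = (x : P ⧸ H) := by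
    intro x
    have : x ∈ (Subgroup.zpowers z).comap (QuotientGroup.mk' H) := by rw [htop]; trivial
    exact this
  constructor
  · intro x
    obtain ⟨i, hi⟩ := key x
    rw [← QuotientGroup.eq_one_iff, QuotientGroup.mk_pow, ← hi, ← zpow_natCast, ← zpow_mul, mul_comm,
      zpow_mul, zpow_natCast, ← hz, pow_orderOf_eq_one, one_zpow]
  · intro x y
    obtain ⟨i, hi⟩ := key x
    obtain ⟨j, hj⟩ := key y
    rw [← QuotientGroup.eq_one_iff]
    have : ((⁅x, y⁆ : P) : P ⧸ H) = ⁅(x : P ⧸ H), (y : P ⧸ H)⁆ := rfl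
    rw [this, ← hi, ← hj, commutatorElement_eq_one_iff_mul_comm, ← zpow_add, ← zpow_add, add_comm]

theorem aux_frat {P : Type*} [Group P] [Finite P] (p : ℕ) [hp : Fact p.Prime]
    (hP : IsPGroup p P) :
    (∀ x, x ^ p ∈ frattini P) ∧ (∀ x y : P, ⁅x, y⁆ ∈ frattini P) := by
  unfold frattini Order.radical
  simp only [Subgroup.mem_iInf]
  exact ⟨fun x H hH => (aux_coatom p hP H hH).1 x, fun x y H hH => (aux_coatom p hP H hH).2 x y⟩

theorem aux_pair {G : Type*} [CommGroup G] (a b : G) (h : Subgroup.closure {a, b} = ⊤) (x : G) :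
    ∃ i j : ℤ, a ^ i * b ^ j = x := by
  have : x ∈ Subgroup.closure {a, b} := by rw [h]; trivial
  exact Subgroup.mem_closure_pair.1 this

theorem aux_closure_map {G H : Type*} [Group G] [Group H] (f : G →* H) (hf : Function.Surjective f)
    (a b : G) (h : Subgroup.closure {a, b} = ⊤) : Subgroup.closure {f a, f b} = ⊤ := by
  rw [← Set.image_pair, ← MonoidHom.map_closure, h, Subgroup.map_top_of_surjective f hf]

theorem aux_card_s9 {G : Type*} [CommGroup G] [Finite G] (p : ℕ) (a b : G)
    (h : Subgroup.closure {a, b} = ⊤) (hp : ∀ x : G, x ^ p = 1) : Nat.card G ∣ p ^ 2 := by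
  let f : Subgroup.zpowers a × Subgroup.zpowers b →* G :=
    (Subgroup.zpowers a).subtype.coprod (Subgroup.zpowers b).subtype
  have hf : Function.Surjective f := by
    intro x
    obtain ⟨i, j, rfl⟩ := aux_pair a b h x
    exact ⟨(⟨a ^ i, i, rfl⟩, ⟨b ^ j, j, rfl⟩), rfl⟩
  refine (Subgroup.card_dvd_of_surjective f hf).trans ?_
  rw [Nat.card_prod, Nat.card_zpowers, Nat.card_zpowers, sq]
  exact mul_dvd_mul (orderOf_dvd_of_pow_eq_one (hp a)) (orderOf_dvd_of_pow_eq_one (hp b))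

theorem aux_frat_index {P : Type*} [Group P] [Finite P] (p : ℕ) [hp : Fact p.Prime]
    (hP : IsPGroup p P) (a b : P) (h : Subgroup.closure {a, b} = ⊤) :
    (frattini P).index ∣ p ^ 2 := by
  obtain ⟨h1, h2⟩ := aux_frat p hP
  let _ : CommGroup (P ⧸ frattini P) :=
    { (inferInstance : Group (P ⧸ frattini P)) with
      mul_comm := by
        intro x y
        induction x using QuotientGroup.induction_on with | H x => ?_
        induction y using QuotientGroup.induction_on with | H y => ?_
        rw [← commutatorElement_eq_one_iff_mul_comm]
        exact (QuotientGroup.eq_one_iff _).2 (h2 x y) }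
  refine aux_card_s9 p (QuotientGroup.mk' _ a) (QuotientGroup.mk' _ b)
    (aux_closure_map _ (QuotientGroup.mk'_surjective _) a b h) ?_
  intro x
  induction x using QuotientGroup.induction_on with | H x => ?_
  exact (QuotientGroup.eq_one_iff _).2 (h1 x)

theorem aux_fix {P : Type*} [Group P] [Finite P] (p q : ℕ) [hp : Fact p.Prime] [hq : Fact q.Prime]
    (hpq : q ≠ p) (hP : IsPGroup p P) (σ : MulAut P) (hσ : σ ^ q = 1) (H : Subgroup P) (y : P)
    (hy : ∀ m ∈ H, y⁻¹ * σ (y * m) ∈ H) : ∃ m ∈ H, σ (y * m) = y * m := by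
  classical
  have := Fintype.ofFinite H
  let f : Function.End H := fun m => ⟨y⁻¹ * σ (y * m), hy m m.2⟩
  have hf : ∀ (k : ℕ) (m : H), (((f ^ k) m : H) : P) = y⁻¹ * (σ ^ k) (y * m) := by
    intro k
    induction k with
    | zero => intro m; simp; rfl
    | succ k ih =>
      intro m
      rw [pow_succ', pow_succ']
      change y⁻¹ * σ (y * ((f ^ k) m : H)) = _
      rw [ih]; simp
  have hf1 : f ^ q ^ 1 = 1 := by
    funext m
    apply Subtype.ext
    rw [hf, pow_one, hσ]; simp; rfl
  have hmod := Equiv.Perm.card_fixedPoints_modEq hf1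
  have hne : Nonempty f.fixedPoints := by
    by_contra hcon
    rw [not_nonempty_iff] at hcon
    rw [Fintype.card_eq_zero (α := f.fixedPoints), Nat.modEq_zero_iff_dvd] at hmod
    obtain ⟨n, hn⟩ := IsPGroup.iff_card.1 (hP.to_subgroup H)
    rw [← Nat.card_eq_fintype_card, hn] at hmod
    exact hpq ((Nat.prime_dvd_prime_iff_eq hq.out hp.out).1 (hq.out.dvd_of_dvd_pow hmod))
  obtain ⟨m, hm⟩ := hne
  refine ⟨m, m.2, ?_⟩
  have : y⁻¹ * σ (y * m) = m := congrArg Subtype.val hm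
  rw [inv_mul_eq_iff_eq_mul] at this
  exact this

/-- induced action on a quotient -/
def auxQ {A G : Type*} [Group A] [Group G] (f : A →* MulAut G) (N : Subgroup G) [N.Normal]
    (h : ∀ a, ∀ x ∈ N, f a x ∈ N) : A →* MulAut (G ⧸ N) where
  toFun a :=
    { toFun := QuotientGroup.map N N (f a).toMonoidHom (h a)
      invFun := QuotientGroup.map N N (f a⁻¹).toMonoidHom (h a⁻¹)
      left_inv := by
        intro x
        induction x using QuotientGroup.induction_on with | H x => ?_
        simp
      right_inv := by
        intro x
        induction x using QuotientGroup.induction_on with | H x => ?_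
        simp
      map_mul' := map_mul _ }
  map_one' := by
    ext x
    induction x using QuotientGroup.induction_on with | H x => ?_
    simp
  map_mul' := by
    intro a b
    ext x
    induction x using QuotientGroup.induction_on with | H x => ?_
    simp

/-- induced action on a subgroup -/
def auxR {A G : Type*} [Group A] [Group G] (f : A →* MulAut G) (N : Subgroup G)
    (h : ∀ a, ∀ x ∈ N, f a x ∈ N) : A →* MulAut N where
  toFun a :=
    { toFun := fun x => ⟨f a x, h a x x.2⟩
      invFun := fun x => ⟨f a⁻¹ x, h a⁻¹ x x.2⟩
      left_inv := by
        intro x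
        apply Subtype.ext
        simp
      right_inv := by
        intro x
        apply Subtype.ext
        simp
      map_mul' := by
        intro x y
        apply Subtype.ext
        simp }
  map_one' := by
    ext x
    simp
  map_mul' := by
    intro a b
    ext x
    simp

theorem aux_cop_s9 {G : Type*} [Group G] [Finite G] (p : ℕ) [hp : Fact p.Prime]
    (h : Nat.card G ∣ p) : (Nat.card (MulAut G)).Coprime p := by
  have := isCyclic_of_card_dvd_prime h
  rw [IsCyclic.card_mulAut]
  rcases (Nat.dvd_prime hp.out).1 h with h | h <;> rw [h]
  · simp
  · rw [Nat.totient_prime hp.out, Nat.coprime_comm, hp.out.coprime_iff_not_dvd]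
    intro h'
    have := Nat.le_of_dvd (by have := hp.out.two_le; omega) h'
    have := hp.out.two_le
    omega

theorem aux_one {A B : Type*} [Group A] [Group B] [Finite B] (p : ℕ) [hp : Fact p.Prime]
    (φ : A →* B) (hB : (Nat.card B).Coprime p) (σ : A) (k : ℕ) (h : σ ^ p ^ k = 1) : φ σ = 1 := by
  rw [← orderOf_eq_one_iff]
  refine Nat.eq_one_of_dvd_coprimes (hB.pow_right k) (orderOf_dvd_natCard _) ?_
  apply orderOf_dvd_of_pow_eq_one
  rw [← map_pow, h, map_one]

theorem aux_inv {P : Type*} [Group P] (M : Subgroup P) (hM : M.Characteristic) (σ : MulAut P)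
    (x : P) (hx : x ∈ M) : σ x ∈ M :=
  Subgroup.characteristic_iff_le_comap.1 hM σ hx

theorem aux_closed {P : Type*} [Group P] [Finite P] (p : ℕ) [hp : Fact p.Prime]
    (hP : IsPGroup p P) (a b : P) (h : Subgroup.closure {a, b} = ⊤) (M : Subgroup P)
    (hM : M.Characteristic) (hMi : M.index = p) :
    ∃ Q : Sylow p (MulAut P), (Q : Subgroup (MulAut P)).Normal := by
  have hFi := aux_frat_index p hP a b h
  have hFM : frattini P ≤ M := by
    have : IsCoatom M := by
      refine ⟨?_, ?_⟩
      · rintro rfl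
        rw [Subgroup.index_top] at hMi
        exact hp.out.one_lt.ne hMi
      · intro K hK
        have h1 := Subgroup.relIndex_mul_index hK.le
        rw [hMi] at h1
        rcases (Nat.dvd_prime hp.out).1 (Dvd.intro_left _ h1) with h2 | h2
        · exact Subgroup.index_eq_one.1 h2
        · rw [h2] at h1
          have h3 : M.relIndex K = 1 := by
            have := hp.out.pos
            nlinarith
          rw [Subgroup.relIndex_eq_one] at h3
          exact absurd h3 (not_le_of_gt hK)
    exact frattini_le_coatom this
  let L := (frattini P).subgroupOf M
  have hL : Nat.card (M ⧸ L) ∣ p := by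
    have h1 := Subgroup.relIndex_mul_index hFM
    rw [← h1, hMi, sq] at hFi
    exact Nat.dvd_of_mul_dvd_mul_right hp.out.pos hFi
  have hPM : Nat.card (P ⧸ M) ∣ p := by
    change M.index ∣ p
    rw [hMi]
  let f : MulAut P →* MulAut (P ⧸ M) := auxQ (MonoidHom.id _) M (fun σ x hx => aux_inv M hM σ x hx)
  let g : MulAut P →* MulAut (M ⧸ L) :=
    auxQ (auxR (MonoidHom.id _) M (fun σ x hx => aux_inv M hM σ x hx)) L (by
      intro σ x hx
      exact aux_inv (frattini P) inferInstance σ x hx)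
  have hf : ∀ σ, f σ = 1 → ∀ x, x⁻¹ * σ x ∈ M := by
    intro σ hσ x
    have h1 : f σ (x : P ⧸ M) = x := by rw [hσ]; rfl
    exact QuotientGroup.eq.1 h1.symm
  have hg : ∀ σ, g σ = 1 → ∀ x ∈ M, x⁻¹ * σ x ∈ frattini P := by
    intro σ hσ x hx
    have h1 : g σ ((⟨x, hx⟩ : M) : M ⧸ L) = (⟨x, hx⟩ : M) := by rw [hσ]; rfl
    have h2 : (⟨x, hx⟩ : M)⁻¹ * ⟨σ x, aux_inv M hM σ x hx⟩ ∈ L := QuotientGroup.eq.1 h1.symm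
    exact h2
  have hker : IsPGroup p (f.ker ⊓ g.ker : Subgroup (MulAut P)) := by
    rw [isPGroup_iff_primeFactors_card_subset hp.out.ne_zero]
    intro q hq
    rw [Nat.mem_primeFactors] at hq
    obtain ⟨hq, hqd, -⟩ := hq
    have := Fact.mk hq
    rw [Nat.Prime.primeFactors hp.out, Finset.mem_singleton]
    by_contra hne
    obtain ⟨⟨σ, hσ⟩, hσq⟩ := exists_prime_orderOf_dvd_card' q hqd
    rw [Subgroup.orderOf_mk] at hσq
    have hσ1 : σ ^ q = 1 := by rw [← hσq, pow_orderOf_eq_one]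
    have hfx := hf σ hσ.1
    have hgx := hg σ hσ.2
    let F : Subgroup P := MonoidHom.eqLocus σ.toMonoidHom (MonoidHom.id P)
    have hMle : M ≤ F ⊔ frattini P := by
      intro y hy
      obtain ⟨m, hm, hm2⟩ := aux_fix p q hne hP σ hσ1 (frattini P) y (by
        intro m hm
        rw [map_mul, ← mul_assoc]
        exact mul_mem (hgx y hy) (aux_inv _ inferInstance σ m hm))
      have h1 : y * m ∈ F ⊔ frattini P := Subgroup.mem_sup_left hm2
      exact (Subgroup.mul_mem_cancel_right _ (Subgroup.mem_sup_right hm)).1 h1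
    have htop : F ⊔ frattini P = ⊤ := by
      rw [eq_top_iff]
      intro y _
      obtain ⟨m, hm, hm2⟩ := aux_fix p q hne hP σ hσ1 M y (by
        intro m hm
        rw [map_mul, ← mul_assoc]
        exact mul_mem (hfx y) (aux_inv _ hM σ m hm))
      have h1 : y * m ∈ F ⊔ frattini P := Subgroup.mem_sup_left hm2
      exact (Subgroup.mul_mem_cancel_right _ (hMle hm)).1 h1
    have hF := frattini_nongenerating htop
    have : σ = 1 := by
      ext x
      have : x ∈ F := by rw [hF]; trivial
      exact this
    rw [this, orderOf_one] at hσq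
    exact hq.one_lt.ne hσq
  obtain ⟨Q⟩ : Nonempty (Sylow p (MulAut P)) := inferInstance
  refine ⟨Q, ?_⟩
  have hQ : (Q : Subgroup (MulAut P)) = f.ker ⊓ g.ker := by
    symm
    apply Q.3 hker
    intro σ hσ
    obtain ⟨k, hk⟩ := Q.2 ⟨σ, hσ⟩
    have hk' : σ ^ p ^ k = 1 := congrArg Subtype.val hk
    exact ⟨aux_one p f (aux_cop_s9 p hPM) σ k hk', aux_one p g (aux_cop_s9 p hL) σ k hk'⟩
  rw [hQ]
  infer_instance

/-- no characteristic subgroup of index p -/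
def AuxNC (p : ℕ) (G : Type*) [Group G] : Prop := ∀ M : Subgroup G, M.Characteristic → M.index ≠ p

theorem AuxNC.quot {p : ℕ} {G : Type*} [Group G] (h : AuxNC p G) (N : Subgroup G)
    [N.Characteristic] : AuxNC p (G ⧸ N) := by
  intro M hM hi
  refine h (M.comap (QuotientGroup.mk' N)) (Subgroup.Characteristic.comap_quotient_mk hM) ?_
  rw [Subgroup.index_comap_of_surjective _ (QuotientGroup.mk'_surjective N), hi]

theorem aux_pow_s9 {G : Type*} [Group G] [Finite G] (p : ℕ) [hp : Fact p.Prime] (hNC : AuxNC p G)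
    (n : ℕ) (f : G →* G) (hf : ∀ x, f x = x ^ n) (hn : ∀ x : G, x ^ (n * p) = 1)
    (hx : ∃ x : G, x ^ n ≠ 1) (c : G) (hc : ∀ x : G, x ^ n ∈ Subgroup.zpowers c) : False := by
  refine hNC f.ker ?_ ?_
  · rw [Subgroup.characteristic_iff_le_comap]
    intro φ x hx
    rw [MonoidHom.mem_ker, hf] at hx
    rw [Subgroup.mem_comap, MonoidHom.mem_ker, hf, ← map_pow, hx, map_one]
  · rw [Subgroup.index_ker]
    have hle : f.range ≤ Subgroup.zpowers c := by
      rintro _ ⟨x, rfl⟩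
      rw [hf]; exact hc x
    have hcyc : IsCyclic f.range := Subgroup.isCyclic_of_le hle
    rw [← IsCyclic.exponent_eq_card]
    have hd : Monoid.exponent f.range ∣ p := by
      apply Monoid.exponent_dvd_of_forall_pow_eq_one
      rintro ⟨_, x, rfl⟩
      apply Subtype.ext
      simp [hf, ← pow_mul, hn]
    rcases (Nat.dvd_prime hp.out).1 hd with h1 | h1
    · exfalso
      obtain ⟨x, hx⟩ := hx
      apply hx
      have := Monoid.pow_exponent_eq_one (⟨f x, x, rfl⟩ : f.range)
      rw [h1, pow_one] at this
      rw [← hf]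
      exact congrArg Subtype.val this
    · exact h1

theorem aux_lin {G : Type*} [CommGroup G] (p : ℕ) [hp : Fact p.Prime] (u v : G) (hu : u ^ p = 1)
    (i j : ℤ) (hi : ¬ (p : ℤ) ∣ i) (h : u ^ i * v ^ j = 1) : u ∈ Subgroup.zpowers v := by
  have hco : IsCoprime (p : ℤ) i := by
    rw [Prime.coprime_iff_not_dvd (Nat.prime_iff_prime_int.1 hp.out)]
    exact hi
  obtain ⟨s, t, hst⟩ := hco
  have h1 : u ^ i = v ^ (-j) := by
    rw [zpow_neg]; exact eq_inv_of_mul_eq_one_left h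
  refine ⟨-j * t, ?_⟩
  change v ^ (-j * t) = u
  rw [zpow_mul, ← h1, ← zpow_mul]
  calc u ^ (i * t) = (u ^ (p : ℤ)) ^ s * u ^ (i * t) := by
        rw [zpow_natCast, hu, one_zpow, one_mul]
    _ = u ^ (s * p + t * i) := by rw [zpow_add, ← zpow_mul, mul_comm (p : ℤ) s, mul_comm t i]
    _ = u := by rw [hst, zpow_one]

theorem aux_abel {G : Type*} [CommGroup G] [Finite G] (p : ℕ) [hp : Fact p.Prime]
    (hG : IsPGroup p G) (a b : G) (h : Subgroup.closure {a, b} = ⊤) (hNC : AuxNC p G)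
    (i j : ℤ) (hij : a ^ i * b ^ j = 1) :
    (Monoid.exponent G : ℤ) ∣ i ∧ (Monoid.exponent G : ℤ) ∣ j := by
  obtain ⟨t, ht⟩ := isPGroup_iff_exponent_eq_pow.1 hG
  have hpos : 0 < p := hp.out.pos
  by_contra hcon
  -- find the largest k
  obtain ⟨k, hk, i', j', hi', hj', hnd⟩ : ∃ k < t, ∃ i' j' : ℤ, i = p ^ k * i' ∧ j = p ^ k * j' ∧
      ¬ ((p : ℤ) ∣ i' ∧ (p : ℤ) ∣ j') := by
    by_contra hno
    push Not at hno
    apply hcon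
    rw [ht]
    have : ∀ k ≤ t, ((p : ℤ) ^ k) ∣ i ∧ ((p : ℤ) ^ k) ∣ j := by
      intro k
      induction k with
      | zero => intro _; simp
      | succ k ih =>
        intro hk
        obtain ⟨⟨i', hi'⟩, ⟨j', hj'⟩⟩ := ih (by omega)
        obtain ⟨h1, h2⟩ := hno k (by omega) i' j' hi' hj'
        rw [hi', hj', pow_succ]
        exact ⟨mul_dvd_mul_left _ h1, mul_dvd_mul_left _ h2⟩
    have := this t le_rfl
    push_cast
    exact this
  obtain ⟨s, rfl⟩ : ∃ s, t = s + 1 := ⟨t - 1, by omega⟩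
  have hn : ∀ x : G, x ^ (p ^ s * p) = 1 := by
    intro x
    rw [← pow_succ, ← ht, Monoid.pow_exponent_eq_one]
  have hx : ∃ x : G, x ^ p ^ s ≠ 1 := by
    by_contra hno
    push Not at hno
    have := Monoid.exponent_dvd_of_forall_pow_eq_one hno
    rw [ht] at this
    have := (Nat.pow_dvd_pow_iff_le_right hp.out.one_lt).1 this
    omega
  have hc : (a ^ p ^ s) ^ i' * (b ^ p ^ s) ^ j' = 1 := by
    have h1 : (a ^ i' * b ^ j') ^ p ^ k = 1 := by
      rw [← hij, hi', hj', mul_pow]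
      simp only [← zpow_natCast, ← zpow_mul]
      push_cast
      rw [mul_comm i', mul_comm j']
    have h2 : (a ^ i' * b ^ j') ^ p ^ s = 1 := by
      obtain ⟨d, hd⟩ := pow_dvd_pow p (show k ≤ s by omega)
      rw [hd, pow_mul, h1, one_pow]
    rw [← h2, mul_pow]
    simp only [← zpow_natCast, ← zpow_mul]
    rw [mul_comm i', mul_comm j']
  have hfin : ∀ c : G, a ^ p ^ s ∈ Subgroup.zpowers c → b ^ p ^ s ∈ Subgroup.zpowers c → False := by
    intro c ha hb
    refine aux_pow_s9 p hNC (p ^ s) (powMonoidHom (p ^ s)) (fun _ => rfl) hn hx c ?_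
    intro x
    obtain ⟨m, n, rfl⟩ := aux_pair a b h x
    rw [mul_pow, ← zpow_natCast, ← zpow_natCast, zpow_comm, zpow_comm b, zpow_natCast, zpow_natCast]
    exact mul_mem (zpow_mem ha _) (zpow_mem hb _)
  by_cases hpi : (p : ℤ) ∣ i'
  · have hpj : ¬ (p : ℤ) ∣ j' := fun h => hnd ⟨hpi, h⟩
    refine hfin (a ^ p ^ s) (Subgroup.mem_zpowers _) ?_
    refine aux_lin p _ _ (by rw [← pow_mul, hn]) j' i' hpj ?_
    rw [mul_comm, hc]
  · refine hfin (b ^ p ^ s) ?_ (Subgroup.mem_zpowers _)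
    exact aux_lin p _ _ (by rw [← pow_mul, hn]) i' j' hpi hc

theorem aux_comm_pow {G : Type*} [Group G] (x y z : G) (hx : Commute z x) (hy : Commute z y)
    (h : y * x = x * y * z) (n : ℕ) : y ^ n * x = x * y ^ n * z ^ n := by
  induction n with
  | zero => simp
  | succ n ih =>
    calc y ^ (n + 1) * x = y * (y ^ n * x) := by rw [pow_succ', mul_assoc]
      _ = (y * x) * y ^ n * z ^ n := by rw [ih]; simp only [mul_assoc]
      _ = x * y * (z * y ^ n) * z ^ n := by rw [h]; simp only [mul_assoc]
      _ = x * y ^ (n + 1) * z ^ (n + 1) := by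
        rw [(hy.pow_right n).eq, pow_succ' y, pow_succ' z]; simp only [mul_assoc]

theorem aux_mul_pow {G : Type*} [Group G] (x y z : G) (hx : Commute z x) (hy : Commute z y)
    (h : y * x = x * y * z) (n : ℕ) : (x * y) ^ n = x ^ n * y ^ n * z ^ (n.choose 2) := by
  induction n with
  | zero => simp
  | succ n ih =>
    have hxy : Commute (z ^ n.choose 2) (x * y) := (hx.mul_right hy).pow_left _
    have hzy : Commute (z ^ n) y := hy.pow_left _
    calc (x * y) ^ (n + 1) = x ^ n * y ^ n * (z ^ n.choose 2 * (x * y)) := by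
          rw [pow_succ, ih]; simp only [mul_assoc]
      _ = x ^ n * (y ^ n * x) * y * z ^ n.choose 2 := by rw [hxy.eq]; simp only [mul_assoc]
      _ = x ^ n * x * y ^ n * (z ^ n * y) * z ^ n.choose 2 := by
          rw [aux_comm_pow x y z hx hy h]; simp only [mul_assoc]
      _ = _ := by
          rw [hzy.eq, Nat.choose_succ_succ' n 1, Nat.choose_one_right, pow_add z, pow_succ x,
            pow_succ y]
          simp only [mul_assoc]

theorem aux_class2 {G : Type*} [Group G] [Finite G] (p : ℕ) [hp : Fact p.Prime] (hodd : Odd p)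
    (hG : IsPGroup p G) (a b : G) (h : Subgroup.closure {a, b} = ⊤) (hNC : AuxNC p G)
    (hcen : ∀ x ∈ commutator G, ∀ y : G, Commute x y)
    (hca : commutator G ≤ Subgroup.zpowers a) : commutator G = ⊥ := by
  obtain ⟨t, ht⟩ := isPGroup_iff_exponent_eq_pow.1 hG
  have hA : IsPGroup p (Abelianization G) := hG.to_quotient (commutator G)
  obtain ⟨r, hr⟩ := isPGroup_iff_exponent_eq_pow.1 hA
  have hNA : AuxNC p (Abelianization G) := hNC.quot (commutator G)
  have habel := aux_abel p hA (Abelianization.of a) (Abelianization.of b)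
    (aux_closure_map _ (QuotientGroup.mk'_surjective _) a b h) hNA
  have hof : ∀ x : G, Abelianization.of x = 1 ↔ x ∈ commutator G := fun x =>
    QuotientGroup.eq_one_iff x
  by_cases hrt : t ≤ r
  · rw [eq_bot_iff]
    intro g hg
    obtain ⟨i, rfl⟩ := hca hg
    have hi := (habel i 0 (by
      rw [zpow_zero, mul_one, ← map_zpow]; exact (hof _).2 hg)).1
    have hd : (Monoid.exponent G : ℤ) ∣ i := by
      refine dvd_trans ?_ hi
      rw [ht, hr]
      exact_mod_cast pow_dvd_pow p hrt
    obtain ⟨w, rfl⟩ := hd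
    rw [Subgroup.mem_bot]
    change a ^ _ = 1
    rw [zpow_mul, zpow_natCast, Monoid.pow_exponent_eq_one, one_zpow]
  · exfalso
    obtain ⟨s, rfl⟩ : ∃ s, t = s + 1 := ⟨t - 1, by omega⟩
    have hn : ∀ x : G, x ^ (p ^ s * p) = 1 := by
      intro x
      rw [← pow_succ, ← ht, Monoid.pow_exponent_eq_one]
    have hx : ∃ x : G, x ^ p ^ s ≠ 1 := by
      by_contra hno
      push Not at hno
      have := Monoid.exponent_dvd_of_forall_pow_eq_one hno
      rw [ht] at this
      have := (Nat.pow_dvd_pow_iff_le_right hp.out.one_lt).1 this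
      omega
    have hmem : ∀ x : G, x ^ p ^ s ∈ commutator G := by
      intro x
      rw [← hof, map_pow]
      obtain ⟨d, hd⟩ := pow_dvd_pow p (show r ≤ s by omega)
      rw [hd, pow_mul, ← hr, Monoid.pow_exponent_eq_one, one_pow]
    have hch : p ^ s ∣ (p ^ s).choose 2 := by
      obtain ⟨m, hm⟩ := hodd.pow (n := s)
      rw [Nat.choose_two_right]
      refine ⟨m, ?_⟩
      have : p ^ s - 1 = 2 * m := by omega
      rw [this]
      rw [show p ^ s * (2 * m) = 2 * (p ^ s * m) by ring]
      simp
    have hmul : ∀ x y : G, (x * y) ^ p ^ s = x ^ p ^ s * y ^ p ^ s := by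
      intro x y
      have hz : ⁅y⁻¹, x⁻¹⁆ ∈ commutator G :=
        Subgroup.commutator_mem_commutator (Subgroup.mem_top _) (Subgroup.mem_top _)
      have hz' : y * x = x * y * ⁅y⁻¹, x⁻¹⁆ := by
        simp [commutatorElement_def, mul_assoc]
      have h1 := aux_comm_pow x y _ (hcen _ hz x) (hcen _ hz y) hz' (p ^ s)
      rw [(hcen _ (hmem y) x).eq] at h1
      have h2 : ⁅y⁻¹, x⁻¹⁆ ^ p ^ s = 1 := by
        exact (left_eq_mul.1 h1)
      rw [aux_mul_pow x y _ (hcen _ hz x) (hcen _ hz y) hz']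
      obtain ⟨d, hd⟩ := hch
      rw [hd, pow_mul, h2, one_pow, mul_one]
    exact aux_pow_s9 p hNC (p ^ s) (MonoidHom.mk' (fun x => x ^ p ^ s) hmul) (fun _ => rfl) hn hx a
      (fun x => hca (hmem x))

theorem aux_comm {G : Type*} [Group G] [Finite G] (p : ℕ) [hp : Fact p.Prime] (hodd : Odd p)
    (hG : IsPGroup p G) (a b : G) (h : Subgroup.closure {a, b} = ⊤) (hNC : AuxNC p G)
    (hca : commutator G ≤ Subgroup.zpowers a) : commutator G = ⊥ := by
  let N : Subgroup G := ⁅commutator G, ⊤⁆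
  have hN : N.Characteristic := Subgroup.commutator_characteristic _ _
  have hsurj := QuotientGroup.mk'_surjective N
  have hmap : (commutator G).map (QuotientGroup.mk' N) = commutator (G ⧸ N) := by
    change Subgroup.map (QuotientGroup.mk' N) ⁅(⊤ : Subgroup G), (⊤ : Subgroup G)⁆ = ⁅(⊤ : Subgroup (G ⧸ N)), ⊤⁆
    rw [Subgroup.map_commutator, Subgroup.map_top_of_surjective _ hsurj]
  have h2 := aux_class2 p hodd (hG.to_quotient N) (QuotientGroup.mk' N a) (QuotientGroup.mk' N b)
    (aux_closure_map _ hsurj a b h) (hNC.quot N) (by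
      intro x hx y
      rw [← hmap] at hx
      obtain ⟨x, hx, rfl⟩ := hx
      obtain ⟨y, rfl⟩ := hsurj y
      rw [← commutatorElement_eq_one_iff_commute, ← map_commutatorElement]
      exact (QuotientGroup.eq_one_iff _).2
        (Subgroup.commutator_mem_commutator hx (Subgroup.mem_top y))) (by
      rw [← hmap, ← MonoidHom.map_zpowers]
      exact Subgroup.map_mono hca)
  rw [← hmap, Subgroup.map_eq_bot_iff, QuotientGroup.ker_mk'] at h2
  have hnil := hG.isNilpotent
  obtain ⟨n, hn⟩ := Subgroup.nilpotent_iff_lowerCentralSeries.1 hnil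
  have : ∀ n, commutator G ≤ (⊤ : Subgroup G).lowerCentralSeries n := by
    intro n
    induction n with
    | zero => simp
    | succ n ih =>
      rw [Subgroup.lowerCentralSeries_succ]
      exact h2.trans (Subgroup.commutator_mono ih le_rfl)
  rw [eq_bot_iff, ← hn]
  exact this n

theorem stmt_9 {P : Type*} [Group P] [Finite P] (p : ℕ) [Fact p.Prime]
    (hodd : Odd p) (hpgrp : IsPGroup p P)
    (hmeta : ∃ (N : Subgroup P) (_ : N.Normal), IsCyclic N ∧ IsCyclic (P ⧸ N))
    (hA : ¬ ∃ Q : Sylow p (MulAut P), (Q : Subgroup (MulAut P)).Normal) :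
    ∃ n : ℕ, 1 ≤ n ∧
      Nonempty (P ≃* Multiplicative (ZMod (p ^ n)) × Multiplicative (ZMod (p ^ n))) := by
  obtain ⟨N, hN, hNc, hQc⟩ := hmeta
  obtain ⟨⟨a, haN⟩, ha⟩ := hNc.exists_generator
  obtain ⟨b, hb⟩ := hQc.exists_generator
  obtain ⟨b, rfl⟩ := QuotientGroup.mk'_surjective N b
  have haz : N = Subgroup.zpowers a := by
    apply le_antisymm
    · intro x hx
      obtain ⟨i, hi⟩ := ha ⟨x, hx⟩
      exact ⟨i, congrArg Subtype.val hi⟩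
    · rw [Subgroup.zpowers_le]; exact haN
  have hgen : Subgroup.closure {a, b} = ⊤ := by
    rw [eq_top_iff]
    intro x _
    obtain ⟨i, hi⟩ := hb (QuotientGroup.mk' N x)
    have h1 : (b ^ i)⁻¹ * x ∈ N := QuotientGroup.eq.1 hi
    rw [haz] at h1
    have ha' : a ∈ Subgroup.closure {a, b} := Subgroup.subset_closure (by simp)
    have hb' : b ∈ Subgroup.closure {a, b} := Subgroup.subset_closure (by simp)
    have h2 := (Subgroup.zpowers_le.2 ha') h1
    exact (Subgroup.mul_mem_cancel_left _ (inv_mem (zpow_mem hb' i))).1 h2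
  have hca : commutator P ≤ Subgroup.zpowers a := by
    rw [← haz, commutator_def, Subgroup.commutator_le]
    intro x _ y _
    rw [← QuotientGroup.eq_one_iff]
    have : ((⁅x, y⁆ : P) : P ⧸ N) = ⁅(x : P ⧸ N), (y : P ⧸ N)⁆ := rfl
    obtain ⟨i, hi⟩ := hb x
    obtain ⟨j, hj⟩ := hb y
    rw [this, ← hi, ← hj, commutatorElement_eq_one_iff_mul_comm]
    exact zpow_mul_comm _ _ _
  have hNC : AuxNC p P := fun M hM hi => hA (aux_closed p hpgrp a b hgen M hM hi)
  have hbot := aux_comm p hodd hpgrp a b hgen hNC hca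
  have hcomm : ∀ x y : P, x * y = y * x := by
    intro x y
    rw [← commutatorElement_eq_one_iff_mul_comm, ← Subgroup.mem_bot, ← hbot]
    exact Subgroup.commutator_mem_commutator (Subgroup.mem_top _) (Subgroup.mem_top _)
  let _ : CommGroup P := { (inferInstance : Group P) with mul_comm := hcomm }
  have habel := aux_abel p hpgrp a b hgen hNC
  obtain ⟨t, ht⟩ := isPGroup_iff_exponent_eq_pow.1 hpgrp
  rw [ht] at habel
  have hoa : orderOf a = p ^ t := by
    apply Nat.dvd_antisymm
    · rw [← ht]; exact Monoid.order_dvd_exponent a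
    · have := (habel (orderOf a) 0 (by simp [pow_orderOf_eq_one])).1
      exact_mod_cast this
  have hob : orderOf b = p ^ t := by
    apply Nat.dvd_antisymm
    · rw [← ht]; exact Monoid.order_dvd_exponent b
    · have := (habel 0 (orderOf b) (by simp [pow_orderOf_eq_one])).2
      exact_mod_cast this
  let f : Subgroup.zpowers a × Subgroup.zpowers b →* P :=
    (Subgroup.zpowers a).subtype.coprod (Subgroup.zpowers b).subtype
  have hf : Function.Bijective f := by
    constructor
    · rw [injective_iff_map_eq_one]
      rintro ⟨⟨_, i, rfl⟩, ⟨_, j, rfl⟩⟩ hij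
      obtain ⟨hi, hj⟩ := habel i j hij
      have h1 : a ^ i = 1 := by rw [← orderOf_dvd_iff_zpow_eq_one, hoa]; exact hi
      have h2 : b ^ j = 1 := by rw [← orderOf_dvd_iff_zpow_eq_one, hob]; exact hj
      exact Prod.ext (Subtype.ext h1) (Subtype.ext h2)
    · intro x
      obtain ⟨i, j, rfl⟩ := aux_pair a b hgen x
      exact ⟨(⟨a ^ i, i, rfl⟩, ⟨b ^ j, j, rfl⟩), rfl⟩
  have hca' : Nat.card (Subgroup.zpowers a) = p ^ t := by rw [Nat.card_zpowers, hoa]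
  have hcb' : Nat.card (Subgroup.zpowers b) = p ^ t := by rw [Nat.card_zpowers, hob]
  have ea := zmodCyclicMulEquiv (G := Subgroup.zpowers a) inferInstance
  have eb := zmodCyclicMulEquiv (G := Subgroup.zpowers b) inferInstance
  rw [hca'] at ea
  rw [hcb'] at eb
  refine ⟨t, ?_, ⟨(MulEquiv.ofBijective f hf).symm.trans (ea.symm.prodCongr eb.symm)⟩⟩
  by_contra ht0
  have ht0 : t = 0 := by omega
  apply hA
  have hs : ∀ x : P, x = 1 := by
    intro x
    have := Monoid.pow_exponent_eq_one x
    rwa [ht, ht0, pow_zero, pow_one] at this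
  have hsub : Subsingleton (MulAut P) :=
    ⟨fun σ τ => by ext x; rw [hs (σ x), hs (τ x)]⟩
  obtain ⟨Q⟩ : Nonempty (Sylow p (MulAut P)) := inferInstance
  refine ⟨Q, ⟨fun x hx g => ?_⟩⟩
  rwa [Subsingleton.elim (g * x * g⁻¹) x]
end
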